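/- Let P be a reversible Markov matrix (in the closure of reversible matrices with positive stationary distribution) on a state space of size N ≥ 2 with all eigenvalues nonnegative and absolute spectral gap 1 - β_⋆ > 0. Then for every 0 < ε < 1, t_mix(ε) ≤ (N + 2 log(1/ε) - 1 + sqrt(2(N-2) log(1/ε))) · t_rel. -/

import Mathlib

/-- The closure of the set of Markov matrices reversible with respect to a strictly
positive stationary distribution. -/
def RevClosure (N : ℕ) : Set (Matrix (Fin N) (Fin N) ℝ) :=
  closure {M | (∀ i j, 0 ≤ M i j) ∧ (∀ i, ∑ j, M i j = 1) ∧
    ∃ p : Fin N → ℝ, (∀ i, 0 < p i) ∧ (∑ i, p i = 1) ∧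
      ∀ i j, p i * M i j = p j * M j i}

open Polynomial in
/-- The Newton polynomial with nodes `y 0, …, y (k - 1)`. -/
noncomputable def newtonPoly (y : ℕ → ℝ) (k : ℕ) : ℝ[X] :=
  ∏ i ∈ Finset.range k, (X - C (y i))

open Polynomial in
/-- Nonnegative combinations of the Newton polynomials of degree less than `m`. -/
def newtonCone (y : ℕ → ℝ) (m : ℕ) : Set ℝ[X] :=
  {g | ∃ c : ℕ → ℝ, (∀ k, 0 ≤ c k) ∧ g = ∑ k ∈ Finset.range m, c k • newtonPoly y k}

namespace newtonCone
open Polynomial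

lemma zero_mem (y : ℕ → ℝ) (m : ℕ) : 0 ∈ newtonCone y m :=
  ⟨0, fun _ => le_rfl, by simp⟩

lemma add_mem {y : ℕ → ℝ} {m : ℕ} {f g : ℝ[X]} (hf : f ∈ newtonCone y m)
    (hg : g ∈ newtonCone y m) : f + g ∈ newtonCone y m := by
  obtain ⟨c, hc, rfl⟩ := hf
  obtain ⟨d, hd, rfl⟩ := hg
  exact ⟨fun k => c k + d k, fun k => add_nonneg (hc k) (hd k),
    by simp [add_smul, Finset.sum_add_distrib]⟩

lemma smul_mem {y : ℕ → ℝ} {m : ℕ} {f : ℝ[X]} {a : ℝ} (ha : 0 ≤ a)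
    (hf : f ∈ newtonCone y m) : a • f ∈ newtonCone y m := by
  obtain ⟨c, hc, rfl⟩ := hf
  exact ⟨fun k => a * c k, fun k => mul_nonneg ha (hc k),
    by simp [Finset.smul_sum, mul_smul]⟩

lemma sum_mem {ι : Type*} {y : ℕ → ℝ} {m : ℕ} {s : Finset ι} {f : ι → ℝ[X]}
    (hf : ∀ i ∈ s, f i ∈ newtonCone y m) : ∑ i ∈ s, f i ∈ newtonCone y m := by
  classical
  induction s using Finset.induction_on with
  | empty => simpa using zero_mem y m
  | insert a s ha ih =>
    rw [Finset.sum_insert ha]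
    exact add_mem (hf _ (by simp)) (ih fun i hi => hf i (by simp [hi]))

lemma newtonPoly_mem {y : ℕ → ℝ} {m k : ℕ} (hk : k < m) : newtonPoly y k ∈ newtonCone y m :=
  ⟨fun j => if j = k then 1 else 0, fun j => by positivity, by simp [ite_smul, hk]⟩

lemma mono {y : ℕ → ℝ} {m m' : ℕ} (h : m ≤ m') : newtonCone y m ⊆ newtonCone y m' := by
  rintro _ ⟨c, hc, rfl⟩
  exact sum_mem fun k hk => smul_mem (hc k) (newtonPoly_mem (by simp at hk; omega))

lemma newtonPoly_succ' (y : ℕ → ℝ) (k : ℕ) :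
    newtonPoly y (k + 1) = (X - C (y 0)) * newtonPoly (fun i => y (i + 1)) k := by
  rw [newtonPoly, Finset.prod_range_succ', mul_comm, newtonPoly]

lemma newtonPoly_mem_of_le (k : ℕ) : ∀ (v y : ℕ → ℝ),
    (∀ i j, i ≤ j → j < k → v j ≤ y i) → newtonPoly v k ∈ newtonCone y (k + 1) := by
  induction k with
  | zero => intro v y _; exact newtonPoly_mem (y := y) (k := 0) (by omega)
  | succ k ih =>
    intro v y h
    have e : newtonPoly v (k + 1) = (y 0 - v 0) • newtonPoly (fun i => v (i + 1)) k
        + (X - C (y 0)) * newtonPoly (fun i => v (i + 1)) k := by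
      rw [newtonPoly_succ', smul_eq_C_mul, C_sub]; ring
    rw [e]
    refine add_mem (smul_mem (sub_nonneg.2 (h 0 0 le_rfl (by omega))) (mono (Nat.le_succ _)
      (ih _ y fun i j hij hj => h i (j + 1) (by omega) (by omega)))) ?_
    obtain ⟨c, hc, hg⟩ := ih (fun i => v (i + 1)) (fun i => y (i + 1))
      fun i j hij hj => h (i + 1) (j + 1) (by omega) (by omega)
    rw [hg, Finset.mul_sum]
    refine sum_mem fun j hj => ?_
    rw [mul_smul_comm, ← newtonPoly_succ']
    exact smul_mem (hc j) (newtonPoly_mem (by simp at hj; omega))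

lemma subset_of_le {v y : ℕ → ℝ} {m : ℕ} (hv : Antitone v) (h : ∀ i < m, v i ≤ y i) :
    newtonCone v (m + 1) ⊆ newtonCone y (m + 1) := by
  rintro _ ⟨c, hc, rfl⟩
  refine sum_mem fun k hk => smul_mem (hc k) ?_
  simp at hk
  exact mono (by omega) (newtonPoly_mem_of_le k v y fun i j hij hj =>
    (hv hij).trans (h i (by omega)))

lemma coeff_nonneg {y : ℕ → ℝ} {m : ℕ} {d : ℕ → ℝ}
    (h : ∑ k ∈ Finset.range m, d k • newtonPoly y k ∈ newtonCone y m) :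
    ∀ k < m, 0 ≤ d k := by
  obtain ⟨c, hc, e⟩ := h
  have key : ∀ (m : ℕ) (y a : ℕ → ℝ),
      ∑ k ∈ Finset.range m, a k • newtonPoly y k = 0 → ∀ k < m, a k = 0 := by
    intro m
    induction m with
    | zero => simp
    | succ m ih =>
      intro y a h
      rw [Finset.sum_range_succ'] at h
      simp_rw [newtonPoly_succ', ← mul_smul_comm] at h
      rw [← Finset.mul_sum] at h
      have h0 : a 0 = 0 := by
        have := congrArg (eval (y 0)) h
        simpa [newtonPoly] using this
      rw [h0, zero_smul, add_zero] at h
      have h1 := (mul_eq_zero.1 h).resolve_left (X_sub_C_ne_zero _)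
      intro k hk
      cases k with
      | zero => exact h0
      | succ k => exact ih _ (fun k => a (k + 1)) h1 k (by omega)
  intro k hk
  have := key m y (fun k => d k - c k) (by simp [sub_smul, Finset.sum_sub_distrib, e]) k hk
  have := hc k
  linarith

end newtonCone

open Matrix in
/-- Orthogonal diagonalization of a real matrix, with eigenvalues in decreasing order. -/
structure OrderedDiagonalization {n : ℕ} (A U : Matrix (Fin n) (Fin n) ℝ) (y : ℕ → ℝ) :
    Prop where
  antitone : Antitone y
  orth : Uᵀ * U = 1
  diag : A * U = U * diagonal fun i : Fin n => y i

namespace OrderedDiagonalization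
open Matrix Polynomial

lemma exists_of_isSymm {n : ℕ} {A : Matrix (Fin n) (Fin n) ℝ} (hA : A.IsSymm) :
    ∃ U y, OrderedDiagonalization A U y := by
  have hH : A.IsHermitian := by
    rw [Matrix.IsHermitian, conjTranspose_eq_transpose_of_trivial]; exact hA
  rcases Nat.eq_zero_or_pos n with rfl | hn
  · exact ⟨1, 0, fun _ _ _ => le_rfl, by simp, Subsingleton.elim _ _⟩
  let σ := Tuple.sort (fun i => - hH.eigenvalues i)
  have hσ : Monotone ((fun i => - hH.eigenvalues i) ∘ σ) := Tuple.monotone_sort _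
  have hun : (hH.eigenvectorUnitary : Matrix (Fin n) (Fin n) ℝ)ᵀ *
      (hH.eigenvectorUnitary : Matrix (Fin n) (Fin n) ℝ) = 1 := by
    have := Unitary.coe_star_mul_self hH.eigenvectorUnitary
    rwa [star_eq_conjTranspose, conjTranspose_eq_transpose_of_trivial] at this
  refine ⟨(hH.eigenvectorUnitary : Matrix (Fin n) (Fin n) ℝ).submatrix id σ,
    fun i => hH.eigenvalues (σ ⟨min i (n - 1), by omega⟩), ?_, ?_, ?_⟩
  · intro i j hij
    have := hσ (a := ⟨min i (n - 1), by omega⟩) (b := ⟨min j (n - 1), by omega⟩)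
      (by simp only [Fin.mk_le_mk]; omega)
    simpa using this
  · ext i j
    have := congrFun (congrFun hun (σ i)) (σ j)
    simpa [Matrix.mul_apply, Matrix.one_apply] using this
  · ext i j
    have hj : (⟨min j (n - 1), by omega⟩ : Fin n) = j := by ext; simp; omega
    have := congrFun (hH.mulVec_eigenvectorBasis (σ j)) i
    simp only [mul_diagonal, hj, submatrix_apply, id]
    simp [Matrix.mulVec, dotProduct] at this
    simp [Matrix.mul_apply, this, mul_comm]

variable {n : ℕ} {A U : Matrix (Fin n) (Fin n) ℝ} {y : ℕ → ℝ}

lemma conj_eq (h : OrderedDiagonalization A U y) :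
    Uᵀ * A * U = diagonal fun i : Fin n => y i := by
  rw [Matrix.mul_assoc, h.diag, ← Matrix.mul_assoc, h.orth, Matrix.one_mul]

lemma eq_conj (h : OrderedDiagonalization A U y) :
    A = U * (diagonal fun i : Fin n => y i) * Uᵀ := by
  rw [← h.diag, Matrix.mul_assoc, mul_eq_one_comm.1 h.orth, Matrix.mul_one]

lemma charpoly_eq (h : OrderedDiagonalization A U y) : A.charpoly = newtonPoly y n := by
  rw [h.eq_conj, Matrix.mul_assoc, charpoly_mul_comm, Matrix.mul_assoc, h.orth, Matrix.mul_one,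
    charpoly_diagonal, newtonPoly, Finset.prod_range]

lemma sum_sq_eq (h : OrderedDiagonalization A U y) :
    ∑ i : Fin n, y i ^ 2 = (A * A).trace := by
  have : A * A = U * (diagonal fun i : Fin n => y i ^ 2) * Uᵀ := by
    calc A * A = (A * U) * (diagonal fun i : Fin n => y i) * Uᵀ := by
          conv_lhs => rw [h.eq_conj]
          conv_rhs => rw [h.eq_conj]
          simp only [Matrix.mul_assoc]
      _ = _ := by
          rw [h.diag, Matrix.mul_assoc U, diagonal_mul_diagonal]; simp [sq]
  rw [this, Matrix.mul_assoc, trace_mul_comm, Matrix.mul_assoc, h.orth, Matrix.mul_one,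
    trace_diagonal]

end OrderedDiagonalization

open Matrix in
/-- The Cauchy interlacing inequality, for a compression of a diagonal matrix. -/
lemma compression_diagonal_le {n : ℕ} {W : Matrix (Fin (n + 1)) (Fin n) ℝ} {y v : ℕ → ℝ}
    (hy : Antitone y) (hv : Antitone v) (hW : Wᵀ * W = 1)
    (hd : Wᵀ * (diagonal fun i : Fin (n + 1) => y i) * W = diagonal fun i : Fin n => v i)
    (i : ℕ) (hi : i < n) : v i ≤ y i := by
  let L : Matrix (Fin n) (Fin n) ℝ := Matrix.of fun k j =>
    if (k : ℕ) < i then W k.castSucc j else if (k : ℕ) = i then 0 else (1 : Matrix _ _ ℝ) k j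
  have hL : L.det = 0 := det_eq_zero_of_row_eq_zero ⟨i, hi⟩ (by simp [L])
  obtain ⟨c, hc0, hc⟩ := exists_mulVec_eq_zero_iff.2 hL
  have hd1 : ∀ k : Fin (n + 1), (k : ℕ) < i → (W *ᵥ c) k = 0 := by
    intro k hk
    have := congrFun hc ⟨k, by omega⟩
    simpa [L, mulVec, dotProduct, hk] using this
  have hc1 : ∀ j : Fin n, i < (j : ℕ) → c j = 0 := by
    intro j hj
    have := congrFun hc j
    simpa [L, mulVec, dotProduct, not_lt.2 hj.le, hj.ne', Matrix.one_apply] using this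
  have e1 : ∑ k, (W *ᵥ c) k ^ 2 = ∑ j, c j ^ 2 := by
    have : (W *ᵥ c) ⬝ᵥ (W *ᵥ c) = c ⬝ᵥ c := by
      rw [dotProduct_mulVec, ← mulVec_transpose, mulVec_mulVec, hW, one_mulVec]
    simpa [dotProduct, sq] using this
  have e2 : ∑ k : Fin (n + 1), y k * (W *ᵥ c) k ^ 2 = ∑ j : Fin n, v j * c j ^ 2 := by
    have : (W *ᵥ c) ⬝ᵥ ((diagonal fun i : Fin (n + 1) => y i) *ᵥ (W *ᵥ c))
        = c ⬝ᵥ ((diagonal fun i : Fin n => v i) *ᵥ c) := by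
      rw [← hd, mulVec_mulVec, dotProduct_comm, dotProduct_mulVec, ← mulVec_transpose,
        mulVec_mulVec, dotProduct_comm, Matrix.mul_assoc]
    simp only [dotProduct, mulVec_diagonal] at this
    calc _ = _ := Finset.sum_congr rfl fun k _ => by ring
      _ = _ := this
      _ = _ := Finset.sum_congr rfl fun k _ => by ring
  have hpos : 0 < ∑ j, c j ^ 2 := by
    obtain ⟨j, hj⟩ := Function.ne_iff.1 hc0
    exact Finset.sum_pos' (fun _ _ => sq_nonneg _) ⟨j, Finset.mem_univ _, by
      have : c j ≠ 0 := hj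
      positivity⟩
  have h1 : v i * ∑ j, c j ^ 2 ≤ ∑ j : Fin n, v j * c j ^ 2 := by
    rw [Finset.mul_sum]
    refine Finset.sum_le_sum fun j _ => ?_
    rcases lt_or_ge i (j : ℕ) with h | h
    · simp [hc1 j h]
    · exact mul_le_mul_of_nonneg_right (hv h) (sq_nonneg _)
  have h2 : ∑ k : Fin (n + 1), y k * (W *ᵥ c) k ^ 2 ≤ y i * ∑ k, (W *ᵥ c) k ^ 2 := by
    rw [Finset.mul_sum]
    refine Finset.sum_le_sum fun j _ => ?_
    rcases lt_or_ge (j : ℕ) i with h | h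
    · simp [hd1 j h]
    · exact mul_le_mul_of_nonneg_right (hy h) (sq_nonneg _)
  rw [e1, e2] at h2
  exact le_of_mul_le_mul_right (h1.trans h2) hpos

namespace OrderedDiagonalization
open Matrix Polynomial

lemma interlace {n : ℕ} {A U : Matrix (Fin (n + 1)) (Fin (n + 1)) ℝ} {y : ℕ → ℝ}
    (h : OrderedDiagonalization A U y) (p : Fin (n + 1)) {V : Matrix (Fin n) (Fin n) ℝ}
    {v : ℕ → ℝ} (h' : OrderedDiagonalization (A.submatrix p.succAbove p.succAbove) V v)
    (i : ℕ) (hi : i < n) : v i ≤ y i := by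
  let E : Matrix (Fin (n + 1)) (Fin n) ℝ := (1 : Matrix _ _ ℝ).submatrix id p.succAbove
  have hE : Eᵀ * E = 1 := by
    ext a b
    simp [E, Matrix.mul_apply, Matrix.one_apply, p.succAbove_right_inj]
  have hB : Eᵀ * A * E = A.submatrix p.succAbove p.succAbove := by
    ext a b
    simp [E, Matrix.mul_apply, Matrix.one_apply]
  have hUU := mul_eq_one_comm.1 h.orth
  refine compression_diagonal_le (W := Uᵀ * E * V) h.antitone h'.antitone ?_ ?_ i hi
  · calc (Uᵀ * E * V)ᵀ * (Uᵀ * E * V) = Vᵀ * (Eᵀ * (U * Uᵀ) * E) * V := by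
          simp only [transpose_mul, transpose_transpose, Matrix.mul_assoc]
      _ = 1 := by rw [hUU, Matrix.mul_one, hE, Matrix.mul_one, h'.orth]
  · calc (Uᵀ * E * V)ᵀ * (diagonal fun i : Fin (n + 1) => y i) * (Uᵀ * E * V)
        = Vᵀ * (Eᵀ * (U * (diagonal fun i : Fin (n + 1) => y i) * Uᵀ) * E) * V := by
          simp only [transpose_mul, transpose_transpose, Matrix.mul_assoc]
      _ = _ := by rw [← h.eq_conj, hB, h'.conj_eq]

end OrderedDiagonalization

section Adjugate
open Matrix Polynomial

lemma charmatrix_submatrix_injective {R m n : Type*} [CommRing R] [DecidableEq m] [DecidableEq n]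
    [Fintype m] [Fintype n] (A : Matrix n n R) {f : m → n} (hf : Function.Injective f) :
    (A.submatrix f f).charmatrix = A.charmatrix.submatrix f f := by
  ext1 i j
  simp [charmatrix_apply, diagonal_apply, hf.eq_iff]

lemma adjugate_charmatrix_diag {R : Type*} [CommRing R] {n : ℕ}
    (A : Matrix (Fin (n + 1)) (Fin (n + 1)) R) (p : Fin (n + 1)) :
    A.charmatrix.adjugate p p = (A.submatrix p.succAbove p.succAbove).charpoly := by
  rw [adjugate_fin_succ_eq_det_submatrix, Matrix.charpoly,
    charmatrix_submatrix_injective _ p.succAbove_right_injective, ← two_mul, pow_mul]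
  simp

lemma adjugate_charmatrix_succAbove {R : Type*} [CommRing R] [IsDomain R] {n : ℕ}
    (A : Matrix (Fin (n + 1)) (Fin (n + 1)) R) (p : Fin (n + 1)) (j : Fin n) :
    A.charmatrix.adjugate p (p.succAbove j) = ∑ l, C (A p (p.succAbove l)) *
      (A.submatrix p.succAbove p.succAbove).charmatrix.adjugate l j := by
  set B := A.submatrix p.succAbove p.succAbove with hB
  set r : Fin n → R[X] := fun l => A.charmatrix.adjugate p (p.succAbove l) with hr
  set b : Fin n → R[X] := fun l => C (A p (p.succAbove l)) with hb
  have h1 : r ᵥ* B.charmatrix = B.charpoly • b := by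
    ext1 l
    have := congrFun (congrFun (adjugate_mul A.charmatrix) p) (p.succAbove l)
    rw [Matrix.mul_apply, Fin.sum_univ_succAbove _ p, adjugate_charmatrix_diag,
      charmatrix_apply_ne _ _ _ (Fin.succAbove_ne p l).symm] at this
    simp only [Matrix.smul_apply, one_apply_ne (Fin.succAbove_ne p l).symm, smul_zero] at this
    rw [hB, charmatrix_submatrix_injective _ p.succAbove_right_injective]
    simp only [vecMul, dotProduct, submatrix_apply, Pi.smul_apply, smul_eq_mul, hr, hb]
    linear_combination this
  have h2 : B.charpoly • r = B.charpoly • (b ᵥ* B.charmatrix.adjugate) := by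
    rw [← smul_vecMul, ← h1, vecMul_vecMul, mul_adjugate, vecMul_smul, vecMul_one]
    rfl
  have h3 := congrFun h2 j
  simp only [Pi.smul_apply, smul_eq_mul] at h3
  exact mul_left_cancel₀ B.charpoly_monic.ne_zero h3

end Adjugate

open Matrix in
/-- The Micchelli-Willoughby theorem, in terms of the adjugate of the characteristic matrix. -/
theorem adjugate_charmatrix_mem_newtonCone (n : ℕ) :
    ∀ (A U : Matrix (Fin n) (Fin n) ℝ) (y : ℕ → ℝ), A.IsSymm → (∀ i j, 0 ≤ A i j) →
      OrderedDiagonalization A U y → ∀ i j, A.charmatrix.adjugate i j ∈ newtonCone y n := by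
  induction n with
  | zero => intro A U y _ _ _ i; exact i.elim0
  | succ n ih =>
    intro A U y hA h0 hU i j
    set B := A.submatrix i.succAbove i.succAbove with hB
    have hBs : B.IsSymm := hA.submatrix _
    obtain ⟨V, v, hV⟩ := OrderedDiagonalization.exists_of_isSymm hBs
    have hle := hU.interlace i hV
    have hsub := newtonCone.subset_of_le hV.antitone hle
    rcases Fin.eq_self_or_eq_succAbove i j with rfl | ⟨l, rfl⟩
    · rw [adjugate_charmatrix_diag, ← hB, hV.charpoly_eq]
      exact hsub (newtonCone.newtonPoly_mem (Nat.lt_succ_self n))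
    · rw [adjugate_charmatrix_succAbove]
      refine newtonCone.sum_mem fun k _ => ?_
      rw [← Polynomial.smul_eq_C_mul]
      exact newtonCone.smul_mem (h0 _ _) (hsub (newtonCone.mono (Nat.le_succ n)
        (ih B V v hBs (fun _ _ => h0 _ _) hV k l)))

open Matrix in
/-- The product `(M - l (m - 1)) ⋯ (M - l 0)`. -/
def shiftProd {n : Type*} [Fintype n] [DecidableEq n] (M : Matrix n n ℝ) (l : ℕ → ℝ) :
    ℕ → Matrix n n ℝ
  | 0 => 1
  | m + 1 => (M - l m • 1) * shiftProd M l m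

section ShiftProd
open Matrix Polynomial

variable {n : Type*} [Fintype n] [DecidableEq n] (M : Matrix n n ℝ) (l : ℕ → ℝ)

lemma shiftProd_eq_aeval (m : ℕ) : shiftProd M l m = aeval M (newtonPoly l m) := by
  induction m with
  | zero => simp [shiftProd, newtonPoly]
  | succ m ih =>
    rw [shiftProd, ih, newtonPoly, newtonPoly, Finset.prod_range_succ, mul_comm (∏ i ∈ _, _), map_mul]
    simp [Algebra.algebraMap_eq_smul_one]

lemma newtonPoly_reflect {l y : ℕ → ℝ} {N : ℕ} (h : ∀ i < N, l i = y (N - 1 - i)) :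
    newtonPoly l N = newtonPoly y N := by
  rw [newtonPoly, newtonPoly, ← Finset.prod_range_reflect]
  refine Finset.prod_congr rfl fun i hi => ?_
  simp at hi
  rw [h _ (by omega), show N - 1 - (N - 1 - i) = i by omega]

lemma adjugate_charmatrix_eq_sum {N : ℕ} {l y : ℕ → ℝ} (h : ∀ i < N, l i = y (N - 1 - i))
    (hchar : M.charpoly = newtonPoly y N) :
    M.charmatrix.adjugate = ∑ k ∈ Finset.range N,
      newtonPoly y k • (shiftProd M l (N - 1 - k)).map C := by
  set S := ∑ k ∈ Finset.range N, newtonPoly y k • (shiftProd M l (N - 1 - k)).map C with hS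
  have key : M.charmatrix * S = M.charpoly • (1 : Matrix n n ℝ[X]) := by
    have hstep : ∀ k ∈ Finset.range N,
        M.charmatrix * (newtonPoly y k • (shiftProd M l (N - 1 - k)).map C) =
          newtonPoly y (k + 1) • (shiftProd M l (N - (k + 1))).map C
            - newtonPoly y k • (shiftProd M l (N - k)).map C := by
      intro k hk
      simp only [Finset.mem_range] at hk
      have e1 : M.charmatrix = (X - C (y k)) • (1 : Matrix n n ℝ[X])
          - (M - y k • (1 : Matrix n n ℝ)).map C := by
        ext1 i j
        by_cases hij : i = j
        · subst hij; simp
        · simp [hij]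
      have e2 : shiftProd M l (N - k)
          = (M - y k • (1 : Matrix n n ℝ)) * shiftProd M l (N - 1 - k) := by
        rw [show N - k = (N - 1 - k) + 1 by omega, shiftProd, h _ (by omega),
          show N - 1 - (N - 1 - k) = k by omega]
      have e3 : newtonPoly y (k + 1) = (X - C (y k)) * newtonPoly y k := by
        rw [newtonPoly, Finset.prod_range_succ, mul_comm, newtonPoly]
      rw [e2, e3, show N - (k + 1) = N - 1 - k by omega, Matrix.map_mul, e1, Matrix.sub_mul,
        Matrix.mul_smul, Matrix.mul_smul, Matrix.smul_mul, Matrix.one_mul, smul_smul, mul_comm]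
    rw [hS, Finset.mul_sum, Finset.sum_congr rfl hstep,
      Finset.sum_range_sub (fun k => newtonPoly y k • (shiftProd M l (N - k)).map C)]
    have hz : shiftProd M l N = 0 := by
      rw [shiftProd_eq_aeval, newtonPoly_reflect h, ← hchar, aeval_self_charpoly]
    rw [Nat.sub_self, Nat.sub_zero, hz, ← hchar]
    simp [shiftProd, Matrix.map_one]
  have h2 : M.charpoly • S = M.charpoly • M.charmatrix.adjugate := by
    calc M.charpoly • S = M.charmatrix.adjugate * (M.charmatrix * S) := by
          rw [← Matrix.mul_assoc, adjugate_mul, Matrix.smul_mul, Matrix.one_mul]; rfl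
      _ = _ := by rw [key, Matrix.mul_smul, Matrix.mul_one]
  ext1 i j
  have h3 := congrFun (congrFun h2 i) j
  simp only [Matrix.smul_apply, smul_eq_mul] at h3
  exact (mul_left_cancel₀ M.charpoly_monic.ne_zero h3).symm

/-- The Micchelli-Willoughby theorem. -/
theorem shiftProd_nonneg_of_isSymm {N : ℕ} {A U : Matrix (Fin N) (Fin N) ℝ} {l y : ℕ → ℝ}
    (hA : A.IsSymm) (h0 : ∀ i j, 0 ≤ A i j) (hU : OrderedDiagonalization A U y)
    (h : ∀ i < N, l i = y (N - 1 - i)) (m : ℕ) (hm : m < N) (i j : Fin N) :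
    0 ≤ shiftProd A l m i j := by
  have h1 := adjugate_charmatrix_mem_newtonCone N A U y hA h0 hU i j
  rw [adjugate_charmatrix_eq_sum A h hU.charpoly_eq] at h1
  have h2 : (∑ k ∈ Finset.range N, newtonPoly y k • (shiftProd A l (N - 1 - k)).map C) i j
      = ∑ k ∈ Finset.range N, (shiftProd A l (N - 1 - k) i j) • newtonPoly y k := by
    rw [Matrix.sum_apply]
    refine Finset.sum_congr rfl fun k _ => ?_
    rw [Matrix.smul_apply, map_apply, smul_eq_mul, mul_comm, smul_eq_C_mul]
  rw [h2] at h1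
  have := newtonCone.coeff_nonneg h1 (N - 1 - m) (by omega)
  rwa [show N - 1 - (N - 1 - m) = m by omega] at this

end ShiftProd

section Closure
open Matrix Polynomial

lemma shiftProd_conj {n : Type*} [Fintype n] [DecidableEq n] (M : Matrix n n ℝ) (l : ℕ → ℝ)
    {D D' : Matrix n n ℝ} (h : D * D' = 1) (m : ℕ) :
    shiftProd (D * M * D') l m = D * shiftProd M l m * D' := by
  have h' := mul_eq_one_comm.1 h
  induction m with
  | zero => simp [shiftProd, h]
  | succ m ih =>
    have e : D * M * D' - l m • 1 = D * (M - l m • 1) * D' := by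
      rw [Matrix.mul_sub, Matrix.sub_mul, Matrix.mul_smul, Matrix.mul_one, Matrix.smul_mul, h]
    rw [shiftProd, ih, shiftProd, e]
    calc D * (M - l m • 1) * D' * (D * shiftProd M l m * D')
        = D * (M - l m • 1) * (D' * D) * shiftProd M l m * D' := by
          simp only [Matrix.mul_assoc]
      _ = _ := by rw [h', Matrix.mul_one]; simp only [Matrix.mul_assoc]

lemma continuous_shiftProd {n X : Type*} [Fintype n] [DecidableEq n] [TopologicalSpace X]
    {M : X → Matrix n n ℝ} {l : X → ℕ → ℝ} (hM : Continuous M) (hl : Continuous l) (m : ℕ) :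
    Continuous fun x => shiftProd (M x) (l x) m := by
  induction m with
  | zero => exact continuous_const
  | succ m ih =>
    have : Continuous fun x => l x m := (continuous_apply m).comp hl
    exact (hM.sub (this.smul continuous_const)).matrix_mul ih

lemma trace_mul_self_le_of_stochastic {n : Type*} [Fintype n] {M : Matrix n n ℝ}
    (h0 : ∀ i j, 0 ≤ M i j) (h1 : ∀ i, ∑ j, M i j = 1) :
    (M * M).trace ≤ Fintype.card n := by
  have hle : ∀ i j, M i j ≤ 1 := fun i j =>
    (Finset.single_le_sum (fun k _ => h0 i k) (Finset.mem_univ j)).trans (h1 i).le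
  calc (M * M).trace = ∑ i, ∑ j, M i j * M j i := by simp [trace, Matrix.mul_apply]
    _ ≤ ∑ i, ∑ j, M i j := Finset.sum_le_sum fun i _ => Finset.sum_le_sum fun j _ =>
        mul_le_of_le_one_right (h0 i j) (hle j i)
    _ = Fintype.card n := by simp [h1]

lemma shiftProd_nonneg_of_reversible {N : ℕ} (hN : 0 < N) {M : Matrix (Fin N) (Fin N) ℝ}
    (h0 : ∀ i j, 0 ≤ M i j) (h1 : ∀ i, ∑ j, M i j = 1) {p : Fin N → ℝ} (hp : ∀ i, 0 < p i)
    (hrev : ∀ i j, p i * M i j = p j * M j i) :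
    ∃ l : ℕ → ℝ, Monotone l ∧ (∀ i, l i ∈ Set.Icc (-N : ℝ) N) ∧ M.charpoly = newtonPoly l N ∧
      ∀ m < N, ∀ i j, 0 ≤ shiftProd M l m i j := by
  set D : Matrix (Fin N) (Fin N) ℝ := diagonal fun i => √(p i) with hD
  set D' : Matrix (Fin N) (Fin N) ℝ := diagonal fun i => (√(p i))⁻¹ with hD'
  have hs : ∀ i, 0 < √(p i) := fun i => Real.sqrt_pos.2 (hp i)
  have hDD : D * D' = 1 := by
    rw [hD, hD', diagonal_mul_diagonal, ← diagonal_one]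
    congr 1
    ext i
    exact mul_inv_cancel₀ (hs i).ne'
  have hD'D := mul_eq_one_comm.1 hDD
  have hent : ∀ (Q : Matrix (Fin N) (Fin N) ℝ) i j,
      (D * Q * D') i j = √(p i) * Q i j * (√(p j))⁻¹ := by
    intro Q i j
    rw [hD, hD', mul_diagonal, diagonal_mul]
  set A := D * M * D' with hA
  have hsymm : A.IsSymm := by
    ext i j
    rw [transpose_apply, hA, hent, hent]
    have h := hrev j i
    have ei := Real.mul_self_sqrt (hp i).le
    have ej := Real.mul_self_sqrt (hp j).le
    have := hs i
    have := hs j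
    field_simp
    linear_combination h + M j i * ej - M i j * ei
  have hA0 : ∀ i j, 0 ≤ A i j := fun i j => by
    rw [hA, hent]
    exact mul_nonneg (mul_nonneg (hs i).le (h0 i j)) (inv_nonneg.2 (hs j).le)
  obtain ⟨U, y, hU⟩ := OrderedDiagonalization.exists_of_isSymm hsymm
  have hchar : M.charpoly = newtonPoly y N := by
    rw [← hU.charpoly_eq, hA, Matrix.mul_assoc, charpoly_mul_comm, Matrix.mul_assoc, hD'D,
      Matrix.mul_one]
  have htr : (A * A).trace ≤ N := by
    have : A * A = D * (M * M) * D' := by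
      calc A * A = D * M * (D' * D) * M * D' := by simp only [hA, Matrix.mul_assoc]
        _ = _ := by rw [hD'D, Matrix.mul_one]; simp only [Matrix.mul_assoc]
    rw [this, Matrix.mul_assoc, trace_mul_comm, Matrix.mul_assoc, hD'D, Matrix.mul_one]
    simpa using trace_mul_self_le_of_stochastic h0 h1
  have hy : ∀ i < N, |y i| ≤ N := by
    intro i hi
    have h2 : y i ^ 2 ≤ N := by
      refine le_trans ?_ (hU.sum_sq_eq.trans_le htr)
      exact Finset.single_le_sum (f := fun i : Fin N => y i ^ 2) (fun _ _ => sq_nonneg _)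
        (Finset.mem_univ ⟨i, hi⟩)
    have h3 : (1 : ℝ) ≤ N := by exact_mod_cast hN
    refine abs_le_of_sq_le_sq ?_ (by positivity)
    nlinarith
  refine ⟨fun i => y (N - 1 - i), fun i j hij => hU.antitone (by omega),
    fun i => abs_le.1 (hy _ (by omega)), ?_, ?_⟩
  · rw [hchar, newtonPoly_reflect fun i _ => rfl]
  · intro m hm i j
    have := shiftProd_nonneg_of_isSymm hsymm hA0 hU (l := fun i => y (N - 1 - i))
      (fun i _ => rfl) m hm i j
    rw [hA, shiftProd_conj _ _ hDD, hent] at this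
    by_contra! hneg
    have := mul_neg_of_neg_of_pos (mul_neg_of_pos_of_neg (hs i) hneg) (inv_pos.2 (hs j))
    linarith

/-- The Micchelli-Willoughby theorem for limits of reversible Markov matrices. -/
theorem shiftProd_nonneg_of_mem_revClosure {N : ℕ} (hN : 0 < N) {P : Matrix (Fin N) (Fin N) ℝ}
    (hP : P ∈ RevClosure N) :
    (∀ i, ∑ j, P i j = 1) ∧ ∃ l : ℕ → ℝ, Monotone l ∧ P.charpoly = newtonPoly l N ∧
      ∀ m < N, ∀ i j, 0 ≤ shiftProd P l m i j := by
  let K := ℕ → Set.Icc (-N : ℝ) N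
  let T : Set (Matrix (Fin N) (Fin N) ℝ × K) :=
    {x | (∀ i, ∑ j, x.1 i j = 1) ∧
      (∀ i j, i ≤ j → (x.2 i : ℝ) ≤ x.2 j) ∧
      (∀ z : ℝ, (scalar (Fin N) z - x.1).det = ∏ i ∈ Finset.range N, (z - x.2 i)) ∧
      ∀ m, m < N → ∀ i j, 0 ≤ shiftProd x.1 (fun k => (x.2 k : ℝ)) m i j}
  have hl : ∀ i, Continuous fun x : Matrix (Fin N) (Fin N) ℝ × K => (x.2 i : ℝ) := fun i =>
    continuous_subtype_val.comp ((continuous_apply i).comp continuous_snd)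
  have hent : ∀ i j, Continuous fun x : Matrix (Fin N) (Fin N) ℝ × K => x.1 i j := fun i j =>
    continuous_fst.matrix_elem i j
  have hT : IsClosed T := by
    simp only [T, Set.ofPred_and, Set.ofPred_forall]
    refine IsClosed.inter ?_ (IsClosed.inter ?_ (IsClosed.inter ?_ ?_))
    · exact isClosed_iInter fun i =>
        isClosed_eq (continuous_finsetSum _ fun j _ => hent i j) continuous_const
    · exact isClosed_iInter fun i => isClosed_iInter fun j => isClosed_iInter fun _ =>
        isClosed_le (hl i) (hl j)
    · exact isClosed_iInter fun z => isClosed_eq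
        (continuous_const.sub continuous_fst).matrix_det
        (continuous_finsetProd _ fun i _ => continuous_const.sub (hl i))
    · exact isClosed_iInter fun m => isClosed_iInter fun _ => isClosed_iInter fun i =>
        isClosed_iInter fun j => isClosed_le continuous_const
          ((continuous_shiftProd continuous_fst (continuous_pi hl) m).matrix_elem i j)
  have hcl := isClosedMap_fst_of_compactSpace T hT
  have hsub : {M : Matrix (Fin N) (Fin N) ℝ | (∀ i j, 0 ≤ M i j) ∧ (∀ i, ∑ j, M i j = 1) ∧
      ∃ p : Fin N → ℝ, (∀ i, 0 < p i) ∧ (∑ i, p i = 1) ∧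
        ∀ i j, p i * M i j = p j * M j i} ⊆ Prod.fst '' T := by
    rintro M ⟨h0, h1, p, hp, -, hrev⟩
    obtain ⟨l, hl1, hl2, hl3, hl4⟩ := shiftProd_nonneg_of_reversible hN h0 h1 hp hrev
    refine ⟨(M, fun i => ⟨l i, hl2 i⟩), ⟨h1, fun i j hij => hl1 hij, fun z => ?_, hl4⟩, rfl⟩
    rw [← eval_charpoly, hl3, newtonPoly, eval_prod]
    simp
  obtain ⟨⟨P', l⟩, ⟨h1, h2, h3, h4⟩, rfl⟩ := closure_minimal hsub hcl hP
  refine ⟨h1, fun i => l i, fun i j hij => h2 i j hij, ?_, h4⟩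
  refine Polynomial.funext fun z => ?_
  rw [eval_charpoly, h3, newtonPoly, eval_prod]
  simp

end Closure

section Mixing
open Matrix Polynomial

/-- If `1` is a simple root of the characteristic polynomial of a matrix with unit row sums, then
its harmonic functions are constant. -/
lemma eq_of_mulVec_eq_self {n : Type*} [Fintype n] [DecidableEq n] {P : Matrix n n ℝ} {g : ℝ[X]}
    (h1 : P *ᵥ 1 = 1) (hchar : P.charpoly = g * (X - C 1)) (hg : g.eval 1 ≠ 0)
    {f : n → ℝ} (hf : P *ᵥ f = f) (x y : n) : f x = f y := by
  have hmult : P.charpoly.rootMultiplicity 1 = 1 := by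
    rw [hchar, rootMultiplicity_mul (hchar ▸ P.charpoly_monic.ne_zero),
      rootMultiplicity_eq_zero hg, rootMultiplicity_X_sub_C_self]
  have hfin := P.toLin'.finrank_eigenspace_le 1
  rw [charpoly_toLin', hmult, finrank_le_one_iff] at hfin
  obtain ⟨v, hv⟩ := hfin
  have hmem : ∀ w : n → ℝ, P *ᵥ w = w → w ∈ Module.End.eigenspace P.toLin' 1 := fun w hw => by
    rw [Module.End.mem_eigenspace_iff, toLin'_apply, hw, one_smul]
  obtain ⟨c, hc⟩ := hv ⟨f, hmem f hf⟩
  obtain ⟨d, hd⟩ := hv ⟨1, hmem 1 h1⟩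
  have hc' := fun z => congrFun (congrArg Subtype.val hc) z
  have hd' := fun z => congrFun (congrArg Subtype.val hd) z
  simp only [Submodule.coe_smul, Pi.smul_apply, smul_eq_mul, Pi.one_apply] at hc' hd'
  have hd0 : d ≠ 0 := fun h => by simpa [h] using hd' x
  have : (v : n → ℝ) x = (v : n → ℝ) y := mul_left_cancel₀ hd0 ((hd' x).trans (hd' y).symm)
  rw [← hc', ← hc', this]

lemma shiftProd_mulVec_one {n : Type*} [Fintype n] [DecidableEq n] {P : Matrix n n ℝ}
    (h1 : P *ᵥ 1 = 1) (l : ℕ → ℝ) (k : ℕ) :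
    shiftProd P l k *ᵥ 1 = (∏ i ∈ Finset.range k, (1 - l i)) • (1 : n → ℝ) := by
  induction k with
  | zero => simp [shiftProd]
  | succ k ih =>
    rw [shiftProd, ← mulVec_mulVec, ih, mulVec_smul, sub_mulVec, h1, smul_mulVec, one_mulVec,
      Finset.prod_range_succ, mul_smul, sub_smul, one_smul]

lemma vecMul_shiftProd {n : Type*} [Fintype n] [DecidableEq n] {P : Matrix n n ℝ} {p : n → ℝ}
    (h1 : p ᵥ* P = p) (l : ℕ → ℝ) (k : ℕ) :
    p ᵥ* shiftProd P l k = (∏ i ∈ Finset.range k, (1 - l i)) • p := by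
  induction k with
  | zero => simp [shiftProd]
  | succ k ih =>
    rw [shiftProd, ← vecMul_vecMul, vecMul_sub, h1, vecMul_smul, vecMul_one,
      Finset.prod_range_succ, mul_comm, mul_smul, ← ih, ← smul_vecMul, sub_smul, one_smul]

/-- The normalization of `shiftProd` with unit row sums. -/
noncomputable def stochasticProd {n : Type*} [Fintype n] [DecidableEq n] (P : Matrix n n ℝ)
    (l : ℕ → ℝ) (k : ℕ) : Matrix n n ℝ :=
  (∏ i ∈ Finset.range k, (1 - l i))⁻¹ • shiftProd P l k

lemma mul_stochasticProd {n : Type*} [Fintype n] [DecidableEq n] (P : Matrix n n ℝ)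
    (l : ℕ → ℝ) (k : ℕ) (hk : l k ≠ 1) :
    P * stochasticProd P l k
      = l k • stochasticProd P l k + (1 - l k) • stochasticProd P l (k + 1) := by
  have hne : 1 - l k ≠ 0 := sub_ne_zero.2 hk.symm
  have e : (1 - l k) * (∏ i ∈ Finset.range (k + 1), (1 - l i))⁻¹
      = (∏ i ∈ Finset.range k, (1 - l i))⁻¹ := by
    rw [Finset.prod_range_succ, mul_inv, mul_left_comm, mul_inv_cancel₀ hne, mul_one]
  simp only [stochasticProd]
  rw [smul_smul (1 - l k), e, shiftProd, Matrix.sub_mul, Matrix.smul_mul, Matrix.one_mul,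
    Matrix.mul_smul, smul_sub, smul_comm (l k)]
  abel

/-- The total variation distance to `p` is convex. -/
lemma half_sum_abs_sub_convex {n : Type*} [Fintype n] {f g p : n → ℝ} {a b : ℝ} (ha : 0 ≤ a)
    (hb : 0 ≤ b) (hab : a + b = 1) :
    (1 / 2) * ∑ y, |a * f y + b * g y - p y|
      ≤ a * ((1 / 2) * ∑ y, |f y - p y|) + b * ((1 / 2) * ∑ y, |g y - p y|) := by
  have : ∑ y, |a * f y + b * g y - p y| ≤ ∑ y, (a * |f y - p y| + b * |g y - p y|) := by
    refine Finset.sum_le_sum fun y _ => ?_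
    have e : a * f y + b * g y - p y = a * (f y - p y) + b * (g y - p y) := by
      linear_combination p y * hab
    rw [e]
    refine (abs_add_le _ _).trans_eq ?_
    rw [abs_mul, abs_mul, abs_of_nonneg ha, abs_of_nonneg hb]
  rw [Finset.sum_add_distrib, ← Finset.mul_sum, ← Finset.mul_sum] at this
  linarith

/-- An exponential bound for the distance to stationarity of a chain with nonnegative spectrum. -/
theorem half_sum_abs_pow_sub_le {m : ℕ} {P : Matrix (Fin (m + 2)) (Fin (m + 2)) ℝ} {l : ℕ → ℝ}
    {p : Fin (m + 2) → ℝ} {b : ℝ} (h1 : P *ᵥ 1 = 1) (hchar : P.charpoly = newtonPoly l (m + 2))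
    (hpos : ∀ k < m + 2, ∀ i j, 0 ≤ shiftProd P l k i j) (hp0 : ∀ i, 0 ≤ p i)
    (hp1 : ∑ i, p i = 1) (hstat : p ᵥ* P = p) (hlast : l (m + 1) = 1)
    (hl0 : ∀ i < m + 1, 0 ≤ l i) (hlb : ∀ i < m + 1, l i ≤ b) (hb : b < 1)
    {s : ℝ} (hs : 0 ≤ s) (t : ℕ) (x : Fin (m + 2)) :
    (1 / 2) * ∑ y, |(P ^ t) x y - p y|
      ≤ Real.exp (s * m) * (b + (1 - b) * Real.exp (-s)) ^ t := by
  have hlt : ∀ i < m + 1, l i < 1 := fun i hi => (hlb i hi).trans_lt hb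
  have hprod : ∀ k ≤ m + 1, 0 < ∏ i ∈ Finset.range k, (1 - l i) := fun k hk =>
    Finset.prod_pos fun i hi => sub_pos.2 (hlt i (by simp at hi; omega))
  have hE0 : ∀ k ≤ m + 1, ∀ i j, 0 ≤ stochasticProd P l k i j := fun k hk i j => by
    rw [stochasticProd, Matrix.smul_apply, smul_eq_mul]
    exact mul_nonneg (inv_nonneg.2 (hprod k hk).le) (hpos k (by omega) i j)
  have hE1 : ∀ k ≤ m + 1, ∀ i, ∑ j, stochasticProd P l k i j = 1 := fun k hk i => by
    have : stochasticProd P l k *ᵥ 1 = 1 := by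
      rw [stochasticProd, smul_mulVec, shiftProd_mulVec_one h1, smul_smul,
        inv_mul_cancel₀ (hprod k hk).ne', one_smul]
    simpa [mulVec, dotProduct] using congrFun this i
  have hPE : P * stochasticProd P l (m + 1) = stochasticProd P l (m + 1) := by
    have hz : shiftProd P l (m + 2) = 0 := by
      rw [shiftProd_eq_aeval, ← hchar, aeval_self_charpoly]
    rw [shiftProd, hlast, one_smul, Matrix.sub_mul, Matrix.one_mul, sub_eq_zero] at hz
    rw [stochasticProd, Matrix.mul_smul, hz]
  have hE : ∀ i j, stochasticProd P l (m + 1) i j = p j := by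
    intro i j
    have hconst : ∀ i', stochasticProd P l (m + 1) i' j = stochasticProd P l (m + 1) i j := by
      intro i'
      refine eq_of_mulVec_eq_self (f := fun i => stochasticProd P l (m + 1) i j) h1
        (g := newtonPoly l (m + 1)) ?_ ?_ ?_ i' i
      · rw [hchar, newtonPoly, Finset.prod_range_succ, hlast, newtonPoly]
      · rw [newtonPoly, eval_prod]
        simpa using (hprod (m + 1) le_rfl).ne'
      · ext i
        simpa [mulVec, dotProduct, Matrix.mul_apply] using congrFun (congrFun hPE i) j
    have hst : p ᵥ* stochasticProd P l (m + 1) = p := by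
      rw [stochasticProd, vecMul_smul, vecMul_shiftProd hstat, smul_smul,
        inv_mul_cancel₀ (hprod (m + 1) le_rfl).ne', one_smul]
    have := congrFun hst j
    simp only [vecMul, dotProduct, hconst] at this
    rwa [← Finset.sum_mul, hp1, one_mul] at this
  have hPtE : ∀ t : ℕ, P ^ t * stochasticProd P l (m + 1) = stochasticProd P l (m + 1) := by
    intro t
    induction t with
    | zero => simp
    | succ t ih => rw [pow_succ, Matrix.mul_assoc, hPE, ih]
  set r := b + (1 - b) * Real.exp (-s) with hr
  have hes : Real.exp (-s) ≤ 1 := Real.exp_le_one_iff.2 (by linarith)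
  have hb0 : 0 ≤ b := (hl0 0 (by omega)).trans (hlb 0 (by omega))
  have hr0 : 0 ≤ r := add_nonneg hb0 (mul_nonneg (by linarith) (Real.exp_pos _).le)
  have main : ∀ t : ℕ, ∀ k ≤ m, (1 / 2) * ∑ y, |(P ^ t * stochasticProd P l k) x y - p y|
      ≤ Real.exp (s * ((m : ℝ) - k)) * r ^ t := by
    intro t
    induction t with
    | zero =>
      intro k hk
      have hle : ∑ y, |stochasticProd P l k x y - p y| ≤ 2 := by
        calc ∑ y, |stochasticProd P l k x y - p y|
            ≤ ∑ y, (stochasticProd P l k x y + p y) := Finset.sum_le_sum fun y _ => by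
              have := hE0 k (by omega) x y
              have := hp0 y
              rw [abs_le]; constructor <;> linarith
          _ = 2 := by rw [Finset.sum_add_distrib, hE1 k (by omega), hp1]; norm_num
      have hkm : (k : ℝ) ≤ m := by exact_mod_cast hk
      have := Real.one_le_exp (mul_nonneg hs (sub_nonneg.2 hkm))
      rw [pow_zero, pow_zero, Matrix.one_mul, mul_one]
      linarith
    | succ t ih =>
      intro k hk
      have hlk := hlt k (by omega)
      have hnext : (1 / 2) * ∑ y, |(P ^ t * stochasticProd P l (k + 1)) x y - p y|
          ≤ Real.exp (s * ((m : ℝ) - k)) * Real.exp (-s) * r ^ t := by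
        rcases hk.lt_or_eq with h | rfl
        · refine (ih (k + 1) (by omega)).trans_eq ?_
          rw [← Real.exp_add]
          push_cast
          ring_nf
        · simp only [hPtE, hE, sub_self, abs_zero, Finset.sum_const_zero, mul_zero]
          positivity
      have hstep : ∀ y, (P ^ (t + 1) * stochasticProd P l k) x y
          = l k * (P ^ t * stochasticProd P l k) x y
            + (1 - l k) * (P ^ t * stochasticProd P l (k + 1)) x y := by
        intro y
        rw [pow_succ, Matrix.mul_assoc, mul_stochasticProd _ _ _ hlk.ne, Matrix.mul_add,
          Matrix.mul_smul, Matrix.mul_smul]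
        rfl
      simp only [hstep]
      refine (half_sum_abs_sub_convex (hl0 k (by omega)) (sub_nonneg.2 hlk.le)
        (by ring)).trans ?_
      have a1 := mul_le_mul_of_nonneg_left (ih k hk) (hl0 k (by omega))
      have a2 := mul_le_mul_of_nonneg_left hnext (sub_nonneg.2 hlk.le)
      have a3 : l k + (1 - l k) * Real.exp (-s) ≤ r := by
        have := mul_nonneg (sub_nonneg.2 (hlb k (by omega))) (sub_nonneg.2 hes)
        rw [hr]
        linarith
      have a4 := mul_le_mul_of_nonneg_left a3
        (show 0 ≤ Real.exp (s * ((m : ℝ) - k)) * r ^ t by positivity)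
      rw [pow_succ]
      linarith
  simpa [stochasticProd, shiftProd] using main t 0 (Nat.zero_le _)

lemma exp_neg_le_quadratic {s : ℝ} (hs : 0 ≤ s) : Real.exp (-s) ≤ 1 - s + s ^ 2 / 2 := by
  have h := Real.quadratic_le_exp_of_nonneg hs
  rw [Real.exp_neg, inv_le_iff_one_le_mul₀ (Real.exp_pos s)]
  have h2 : 0 ≤ 1 - s + s ^ 2 / 2 := by nlinarith [sq_nonneg (s - 1)]
  nlinarith [mul_le_mul_of_nonneg_left h h2, sq_nonneg (s ^ 2)]

/-- The Chernoff bound for the lower tail of a binomial variable, optimized over `s`. -/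
lemma exists_chernoff_le {a L b t : ℝ} (ha : 0 ≤ a) (hL : 0 < L)
    (ht : a + 2 * L + √(2 * a * L) ≤ t * (1 - b)) :
    ∃ s, 0 ≤ s ∧ s * a + t * ((1 - b) * (Real.exp (-s) - 1)) ≤ -L := by
  set r := √(2 * a * L) with hr
  have hr0 : 0 ≤ r := Real.sqrt_nonneg _
  have hr2 : r ^ 2 = 2 * a * L := Real.sq_sqrt (by positivity)
  set μ := t * (1 - b) with hμ
  have hμ0 : 0 < μ := by linarith
  refine ⟨(μ - a) / μ, div_nonneg (by linarith) hμ0.le, ?_⟩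
  set s := (μ - a) / μ with hs
  have hsμ : s * μ = μ - a := div_mul_cancel₀ _ hμ0.ne'
  have h1 := mul_le_mul_of_nonneg_left
    (exp_neg_le_quadratic (s := s) (div_nonneg (by linarith) hμ0.le)) hμ0.le
  have h2 : 2 * L * μ ≤ (μ - a) ^ 2 := by nlinarith
  have h3 : 2 * L ≤ s * (μ - a) := by
    rw [hs, div_mul_eq_mul_div, le_div_iff₀ hμ0]
    linarith
  have h4 : s * (μ - a) = s ^ 2 * μ := by rw [← hsμ]; ring
  have h5 : t * ((1 - b) * (Real.exp (-s) - 1)) = μ * Real.exp (-s) - μ := by rw [hμ]; ring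
  rw [h5]
  nlinarith

end Mixing

/-- Matching an increasing list of roots with one whose last element is the strict maximum. -/
lemma roots_of_newtonPoly_eq {m : ℕ} {l : ℕ → ℝ} {β : Fin (m + 2) → ℝ} {b : ℝ}
    (hl : Monotone l)
    (h : newtonPoly l (m + 2) = ∏ j, (Polynomial.X - Polynomial.C (β j)))
    (hlast : β (Fin.last (m + 1)) = 1) (hβ : ∀ j : Fin (m + 1), β j.castSucc ≤ b) (hb : b < 1) :
    l (m + 1) = 1 ∧ ∀ i < m + 1, ∃ j : Fin (m + 1), l i = β j.castSucc := by
  have h1 : ∀ z : ℝ, ∏ i ∈ Finset.range (m + 2), (z - l i) = ∏ j, (z - β j) := fun z => by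
    simpa [newtonPoly, Polynomial.eval_prod] using congrArg (Polynomial.eval z) h
  have hlast' : l (m + 1) = 1 := by
    apply le_antisymm
    · have := h1 (l (m + 1))
      rw [Finset.prod_range_succ, sub_self, mul_zero] at this
      obtain ⟨j, -, hj⟩ := Finset.prod_eq_zero_iff.1 this.symm
      rw [sub_eq_zero.1 hj]
      induction j using Fin.lastCases with
      | last => exact hlast.le
      | cast j => exact (hβ j).trans hb.le
    · have := h1 1
      rw [Fin.prod_univ_castSucc, hlast, sub_self, mul_zero] at this
      obtain ⟨i, hi, hi'⟩ := Finset.prod_eq_zero_iff.1 this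
      rw [sub_eq_zero.1 hi']
      exact hl (by simp at hi; omega)
  refine ⟨hlast', fun i hi => ?_⟩
  rw [newtonPoly, Finset.prod_range_succ, Fin.prod_univ_castSucc, hlast', hlast] at h
  have h2 := congrArg (Polynomial.eval (l i))
    (mul_right_cancel₀ (Polynomial.X_sub_C_ne_zero (1 : ℝ)) h)
  have h3 : ∏ k ∈ Finset.range (m + 1), (l i - l k) = ∏ j : Fin (m + 1), (l i - β j.castSucc) := by
    simpa [Polynomial.eval_prod] using h2
  rw [Finset.prod_eq_zero (Finset.mem_range.2 hi) (sub_self _)] at h3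
  obtain ⟨j, -, hj⟩ := Finset.prod_eq_zero_iff.1 h3.symm
  exact ⟨j, sub_eq_zero.1 hj⟩

/-- Theorem 1.3 of the paper in the case of nonnegative eigenvalues: for reversible
`P` on `N` states with all eigenvalues nonnegative and absolute spectral gap
`1 - βs > 0`,
`t_mix(ε) ≤ (N + 2 log ε⁻¹ - 1 + √(2(N-2) log ε⁻¹)) · t_rel`. -/
theorem mixing_time_reversible_nonneg (N : ℕ) (hN : 2 ≤ N)
    (P : Matrix (Fin N) (Fin N) ℝ) (hPcl : P ∈ RevClosure N)
    (piv : Fin N → ℝ) (hpiv0 : ∀ i, 0 ≤ piv i) (hpiv1 : ∑ i, piv i = 1)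
    (hstat : ∀ j, ∑ i, piv i * P i j = piv j)
    (hrev : ∀ i j, piv i * P i j = piv j * P j i)
    (β : Fin N → ℝ)
    (hchar : P.charpoly = ∏ j, (Polynomial.X - Polynomial.C (β j)))
    (hβ0 : ∀ j, 0 ≤ β j)
    (hβlast : ∀ j : Fin N, (j : ℕ) = N - 1 → β j = 1)
    (βs : ℝ) (hβ : ∀ j : Fin N, (j : ℕ) < N - 1 → |β j| ≤ βs)
    (hβs0 : 0 ≤ βs) (hβs1 : βs < 1)
    (ε : ℝ) (hε0 : 0 < ε) (hε1 : ε < 1) :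
    ((sInf {t : ℕ | ∀ x, (1 / 2) * ∑ y, |(P ^ t) x y - piv y| ≤ ε} : ℕ) : ℝ) ≤
      ((N : ℝ) + 2 * Real.log ε⁻¹ - 1
          + Real.sqrt (2 * ((N - 2 : ℕ) : ℝ) * Real.log ε⁻¹)) * (1 / (1 - βs)) := by
  obtain ⟨m, rfl⟩ : ∃ m, N = m + 2 := ⟨N - 2, by omega⟩
  obtain ⟨hP1, l, hl, hlchar, hlpos⟩ := shiftProd_nonneg_of_mem_revClosure (by omega) hPcl
  obtain ⟨hlast, hroot⟩ := roots_of_newtonPoly_eq hl (hlchar.symm.trans hchar)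
    (hβlast _ (by simp)) (fun j => (le_abs_self _).trans (hβ j.castSucc j.isLt)) hβs1
  have hlog : 0 < Real.log ε⁻¹ := Real.log_pos ((one_lt_inv₀ hε0).2 hε1)
  set L := Real.log ε⁻¹ with hL
  have hp : 0 < 1 - βs := by linarith
  have hm0 : (0 : ℝ) ≤ m := Nat.cast_nonneg m
  simp only [Nat.add_sub_cancel]
  push_cast
  set R := (m : ℝ) + 2 * L + √(2 * m * L) with hR
  have hR0 : 0 ≤ R := by positivity
  set t := ⌈R / (1 - βs)⌉₊ with ht
  have ht1 : R ≤ t * (1 - βs) := (div_le_iff₀ hp).1 (Nat.le_ceil _)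
  have ht2 : (t : ℝ) ≤ (R + 1) * (1 / (1 - βs)) := by
    have h1 := Nat.ceil_lt_add_one (div_nonneg hR0 hp.le)
    have h2 : 1 ≤ 1 / (1 - βs) := by rw [le_div_iff₀ hp]; linarith
    rw [add_mul, one_mul, mul_one_div]
    linarith
  obtain ⟨s, hs0, hs⟩ := exists_chernoff_le hm0 hlog ht1
  have hmem : t ∈ {t : ℕ | ∀ x, (1 / 2) * ∑ y, |(P ^ t) x y - piv y| ≤ ε} := by
    intro x
    refine (half_sum_abs_pow_sub_le (b := βs) (s := s) ?_ hlchar hlpos hpiv0 hpiv1 ?_ hlast ?_ ?_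
      hβs1 hs0 t x).trans ?_
    · ext i
      simpa [Matrix.mulVec, dotProduct] using hP1 i
    · ext j
      exact hstat j
    · intro i hi
      obtain ⟨j, hj⟩ := hroot i hi
      exact hj ▸ hβ0 _
    · intro i hi
      obtain ⟨j, hj⟩ := hroot i hi
      exact hj ▸ (le_abs_self _).trans (hβ j.castSucc j.isLt)
    · have h1 : βs + (1 - βs) * Real.exp (-s) ≤ Real.exp ((1 - βs) * (Real.exp (-s) - 1)) := by
        have := Real.add_one_le_exp ((1 - βs) * (Real.exp (-s) - 1))
        linarith
      calc _ ≤ Real.exp (s * m) * Real.exp ((1 - βs) * (Real.exp (-s) - 1)) ^ t := by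
            gcongr
        _ = Real.exp (s * m + t * ((1 - βs) * (Real.exp (-s) - 1))) := by
            rw [← Real.exp_nat_mul, ← Real.exp_add]
        _ ≤ Real.exp (-L) := Real.exp_le_exp.2 hs
        _ = ε := by rw [hL, Real.log_inv, neg_neg, Real.exp_log hε0]
  refine (Nat.cast_le.2 (Nat.sInf_le hmem)).trans (ht2.trans_eq ?_)
  rw [hR]
  ring
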